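/- arXiv:solv-int/9505002 — 3 statements merged into one kernel-verified Lean document; each statement's English description precedes it below -/
import Mathlib

section
/- The Halphen system has no non-trivial rational first integral: if A, B ∈ ℂ[x₁,x₂,x₃] with B ≠ 0 and the rational function F = A/B satisfies d_H(F) = 0 (where d_H is extended to the fraction field ℂ(x₁,x₂,x₃) as a derivation), then F is a constant. -/
open MvPolynomial

/-- Components of the Halphen vector field:
`V₁ = x₂x₃ − x₁(x₂+x₃)`, `V₂ = x₃x₁ − x₂(x₃+x₁)`, `V₃ = x₁x₂ − x₃(x₁+x₂)`. -/
noncomputable def V1 : MvPolynomial (Fin 3) ℂ := X 1 * X 2 - X 0 * (X 1 + X 2)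
noncomputable def V2 : MvPolynomial (Fin 3) ℂ := X 2 * X 0 - X 1 * (X 2 + X 0)
noncomputable def V3 : MvPolynomial (Fin 3) ℂ := X 0 * X 1 - X 2 * (X 0 + X 1)

/-- The Halphen derivation `d_H(F) = V₁∂₁F + V₂∂₂F + V₃∂₃F` on `ℂ[x₁,x₂,x₃]`. -/
noncomputable def dH (F : MvPolynomial (Fin 3) ℂ) : MvPolynomial (Fin 3) ℂ :=
  V1 * pderiv 0 F + V2 * pderiv 1 F + V3 * pderiv 2 F

/-- Apply a derivation to each coefficient of a polynomial. -/
noncomputable def liftD {A : Type*} [CommRing A] [Algebra ℂ A] (d : Derivation ℂ A A) :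
    Derivation ℂ (Polynomial A) (Polynomial A) :=
  Derivation.mk'
    ((PolynomialModule.equivPolynomialSelf (R := A)).toLinearMap.restrictScalars ℂ ∘ₗ
      (d.mapCoeffs : Polynomial A →ₗ[ℂ] PolynomialModule A A)) (by
    intro a b
    simp only [LinearMap.comp_apply, LinearMap.restrictScalars_apply, LinearEquiv.coe_coe,
      Derivation.coeFn_coe, Derivation.leibniz, map_add, map_smul])

lemma coeff_liftD {A : Type*} [CommRing A] [Algebra ℂ A] (d : Derivation ℂ A A)
    (f : Polynomial A) (i : ℕ) : (liftD d f).coeff i = d (f.coeff i) := rfl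

lemma liftD_C {A : Type*} [CommRing A] [Algebra ℂ A] (d : Derivation ℂ A A)
    (a : A) : liftD d (Polynomial.C a) = Polynomial.C (d a) := by
  ext i
  rw [coeff_liftD, Polynomial.coeff_C, Polynomial.coeff_C]
  split_ifs <;> simp

lemma liftD_X {A : Type*} [CommRing A] [Algebra ℂ A] (d : Derivation ℂ A A) :
    liftD d (Polynomial.X) = 0 := by
  ext i
  rw [coeff_liftD, Polynomial.coeff_X]
  split_ifs <;> simp

/-- Transport of the Halphen derivation along a substitution. -/
lemma transport {S : Type*} [CommRing S] [Algebra ℂ S] (D : Derivation ℂ S S) (f : Fin 3 → S)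
    (h0 : D (f 0) = aeval f V1) (h1 : D (f 1) = aeval f V2) (h2 : D (f 2) = aeval f V3)
    (G : MvPolynomial (Fin 3) ℂ) : D (aeval f G) = aeval f (dH G) := by
  induction G using MvPolynomial.induction_on with
  | C a => simp [dH]
  | add p q hp hq =>
    have : dH (p + q) = dH p + dH q := by simp only [dH, map_add]; ring
    rw [this, map_add, map_add, map_add, hp, hq]
  | mul_X p i hp =>
    have : dH (p * X i) = dH p * X i + p * dH (X i) := by
      simp only [dH, Derivation.leibniz, smul_eq_mul]; ring
    rw [this, map_mul, Derivation.leibniz, hp, map_add, map_mul, map_mul, aeval_X]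
    have h : D (f i) = aeval f (dH (X i)) := by
      fin_cases i
      · simp [dH, h0, pderiv_X]
      · simp [dH, h1, pderiv_X]
      · simp [dH, h2, pderiv_X]
    rw [h]; simp only [smul_eq_mul]; ring

lemma totalDegree_mul_pderiv_le (i : Fin 3) (V F : MvPolynomial (Fin 3) ℂ)
    (hV : V.totalDegree ≤ 2) : (V * pderiv i F).totalDegree ≤ F.totalDegree + 1 := by
  by_cases h : pderiv i F = 0
  · simp [h]
  have : (pderiv i F).totalDegree + 1 ≤ F.totalDegree := by
    obtain ⟨m, hm, hd⟩ := Finset.exists_mem_eq_sup (pderiv i F).support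
      (support_nonempty.2 h) (fun s => s.sum fun _ e => e)
    rw [mem_support_iff, coeff_pderiv] at hm
    have h2 := le_totalDegree (p := F) (s := m + Finsupp.single i 1)
      (mem_support_iff.2 (left_ne_zero_of_mul hm))
    rw [Finsupp.sum_add_index' (by simp) (by simp)] at h2
    simp at h2
    unfold totalDegree at *
    rw [hd]; exact h2
  have := totalDegree_mul V (pderiv i F)
  omega

lemma quad_deg (a b c d e : Fin 3) :
    (X a * X b - X c * (X d + X e) : MvPolynomial (Fin 3) ℂ).totalDegree ≤ 2 := by
  refine (totalDegree_sub _ _).trans (max_le ?_ ?_)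
  · refine (totalDegree_mul _ _).trans ?_
    simp
  · refine (totalDegree_mul _ _).trans ?_
    have := totalDegree_add (X d : MvPolynomial (Fin 3) ℂ) (X e)
    simp at this ⊢
    omega

lemma totalDegree_dH (F : MvPolynomial (Fin 3) ℂ) : (dH F).totalDegree ≤ F.totalDegree + 1 := by
  refine (totalDegree_add _ _).trans (max_le ((totalDegree_add _ _).trans (max_le ?_ ?_)) ?_)
  all_goals exact totalDegree_mul_pderiv_le _ _ _ (quad_deg _ _ _ _ _)

lemma linear_form (K : MvPolynomial (Fin 3) ℂ) (h : K.totalDegree ≤ 1) :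
    ∃ k a b c : ℂ, K = C k + C a * X 0 + C b * X 1 + C c * X 2 := by
  rw [K.as_sum]
  refine Finset.sum_induction _ (fun K => ∃ k a b c : ℂ, K = C k + C a * X 0 + C b * X 1 + C c * X 2)
    ?_ ⟨0, 0, 0, 0, by simp⟩ ?_
  · rintro _ _ ⟨k, a, b, c, rfl⟩ ⟨k', a', b', c', rfl⟩
    exact ⟨k + k', a + a', b + b', c + c', by simp only [map_add]; ring⟩
  · intro s hs
    have hs' := (le_totalDegree hs).trans h
    rw [monomial_eq]
    rw [Finsupp.sum_fintype _ _ (by simp), Fin.sum_univ_three] at hs'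
    rw [Finsupp.prod_fintype _ _ (by simp), Fin.prod_univ_three]
    generalize coeff s K = t
    rcases (show (s 0 = 0 ∧ s 1 = 0 ∧ s 2 = 0) ∨ (s 0 = 1 ∧ s 1 = 0 ∧ s 2 = 0) ∨
      (s 0 = 0 ∧ s 1 = 1 ∧ s 2 = 0) ∨ (s 0 = 0 ∧ s 1 = 0 ∧ s 2 = 1) by omega) with
      ⟨h0, h1, h2⟩ | ⟨h0, h1, h2⟩ | ⟨h0, h1, h2⟩ | ⟨h0, h1, h2⟩
    · exact ⟨t, 0, 0, 0, by simp [h0, h1, h2]⟩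
    · exact ⟨0, t, 0, 0, by simp [h0, h1, h2]⟩
    · exact ⟨0, 0, t, 0, by simp [h0, h1, h2]⟩
    · exact ⟨0, 0, 0, t, by simp [h0, h1, h2]⟩

/-- The restricted derivation on a plane: `y' = -y²`, `w' = -2yw`. -/
noncomputable def Dp : Derivation ℂ (Polynomial (Polynomial ℂ)) (Polynomial (Polynomial ℂ)) :=
  liftD ((-(Polynomial.X : Polynomial ℂ) ^ 2) • Polynomial.derivative') +
    (-2 * Polynomial.C (Polynomial.X : Polynomial ℂ) * Polynomial.X : Polynomial (Polynomial ℂ)) •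
      (Polynomial.derivative' (R := Polynomial ℂ)).restrictScalars ℂ

lemma Dp_Y : Dp (Polynomial.C Polynomial.X) = - (Polynomial.C Polynomial.X) ^ 2 := by
  simp [Dp, liftD_C]

lemma Dp_W : Dp Polynomial.X = -2 * Polynomial.C (Polynomial.X : Polynomial ℂ) * Polynomial.X := by
  simp [Dp, liftD_X]

lemma Dp_natDegree (f : Polynomial (Polynomial ℂ)) : (Dp f).natDegree ≤ f.natDegree := by
  have h1 : (liftD ((-(Polynomial.X : Polynomial ℂ) ^ 2) • Polynomial.derivative') f).natDegree
      ≤ f.natDegree := by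
    rw [Polynomial.natDegree_le_iff_coeff_eq_zero]
    intro N hN
    rw [coeff_liftD, Polynomial.coeff_eq_zero_of_natDegree_lt hN, map_zero]
  have h2 : ((-2 * Polynomial.C (Polynomial.X : Polynomial ℂ) * Polynomial.X : Polynomial (Polynomial ℂ)) *
      Polynomial.derivative f).natDegree ≤ f.natDegree := by
    rw [Polynomial.natDegree_le_iff_coeff_eq_zero]
    intro N hN
    have : (-2 * Polynomial.C (Polynomial.X : Polynomial ℂ) * Polynomial.X : Polynomial (Polynomial ℂ)) *
      Polynomial.derivative f = Polynomial.C (-2 * Polynomial.X) *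
        (Polynomial.derivative f * Polynomial.X) := by
      simp only [map_mul, map_neg, Polynomial.C_ofNat]; ring
    rw [this, Polynomial.coeff_C_mul]
    obtain ⟨M, rfl⟩ : ∃ M, N = M + 1 := ⟨N - 1, by omega⟩
    rw [Polynomial.coeff_mul_X, Polynomial.coeff_derivative,
      Polynomial.coeff_eq_zero_of_natDegree_lt hN]
    simp
  exact (Polynomial.natDegree_add_le _ _).trans (max_le h1 h2)

lemma plane_K (f : Fin 3 → Polynomial (Polynomial ℂ))
    (h0 : Dp (f 0) = aeval f V1) (h1 : Dp (f 1) = aeval f V2) (h2 : Dp (f 2) = aeval f V3)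
    (G K : MvPolynomial (Fin 3) ℂ) (hG : aeval f G ≠ 0) (h : dH G = K * G) :
    (aeval f K).natDegree = 0 := by
  have := Dp_natDegree (aeval f G)
  rw [transport Dp f h0 h1 h2, h, map_mul] at this
  by_cases hK : aeval f K = 0
  · simp [hK]
  · rw [Polynomial.natDegree_mul hK hG] at this
    omega

/-- The way back from the plane. -/
noncomputable def back (u v : MvPolynomial (Fin 3) ℂ) :
    Polynomial (Polynomial ℂ) →+* MvPolynomial (Fin 3) ℂ :=
  Polynomial.eval₂RingHom (Polynomial.eval₂RingHom C u) v

lemma plane_dvd (f : Fin 3 → Polynomial (Polynomial ℂ)) (u v L : MvPolynomial (Fin 3) ℂ)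
    (hb : ∀ i, L ∣ back u v (f i) - X i)
    (G : MvPolynomial (Fin 3) ℂ) (hG : aeval f G = 0) : L ∣ G := by
  have key : L ∣ back u v (aeval f G) - G := by
    clear hG
    induction G using MvPolynomial.induction_on with
    | C a => simp [back, Polynomial.algebraMap_apply]
    | add p q hp hq =>
      have := dvd_add hp hq
      rw [map_add, map_add]
      convert this using 1; ring
    | mul_X p i hp =>
      have := dvd_add (hp.mul_right (X i)) ((hb i).mul_left (back u v (aeval f p)))
      rw [map_mul, map_mul, aeval_X]
      convert this using 1; ring
  rw [hG, map_zero, zero_sub] at key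
  exact (dvd_neg).1 key

/-- The derivation in coordinates `z = x₃`, `p = x₁ - x₃`, `q = x₂ - x₃`. -/
noncomputable def Ez : Derivation ℂ (MvPolynomial (Fin 2) ℂ) (MvPolynomial (Fin 2) ℂ) :=
  (X 0 : MvPolynomial (Fin 2) ℂ) • pderiv 0 + (X 1 : MvPolynomial (Fin 2) ℂ) • pderiv 1

noncomputable def dz : Derivation ℂ (MvPolynomial (Fin 2) ℂ) (MvPolynomial (Fin 2) ℂ) :=
  (-2 * X 0 * X 1 : MvPolynomial (Fin 2) ℂ) • (pderiv 0 + pderiv 1)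

noncomputable def Dz : Derivation ℂ (Polynomial (MvPolynomial (Fin 2) ℂ))
    (Polynomial (MvPolynomial (Fin 2) ℂ)) :=
  liftD dz + (-2 * Polynomial.X : Polynomial (MvPolynomial (Fin 2) ℂ)) • liftD Ez +
    (Polynomial.C (X 0 * X 1) - Polynomial.X ^ 2 : Polynomial (MvPolynomial (Fin 2) ℂ)) •
      (Polynomial.derivative' (R := MvPolynomial (Fin 2) ℂ)).restrictScalars ℂ

lemma coeff_Ez (g : MvPolynomial (Fin 2) ℂ) (s : Fin 2 →₀ ℕ) :
    coeff s (Ez g) = ((s 0 + s 1 : ℕ) : ℂ) * coeff s g := by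
  induction g using MvPolynomial.induction_on' with
  | monomial t a =>
    have : ∀ i, X i * pderiv i (monomial t a) = monomial t (a * (t i : ℂ)) := by
      intro i
      rw [pderiv_monomial, X, monomial_mul, one_mul]
      by_cases h : t i = 0
      · simp [h]
      · congr 1
        congr 1
        ext j
        by_cases hj : i = j
        · subst hj; simp; omega
        · simp [hj]
    simp only [Ez, Derivation.add_apply, Derivation.smul_apply, smul_eq_mul, this, coeff_add,
      coeff_monomial]
    split_ifs with h
    · subst h; push_cast; ring
    · simp
  | add p q hp hq => rw [map_add, coeff_add, hp, hq, coeff_add]; ring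

lemma Dz_top (f : Polynomial (MvPolynomial (Fin 2) ℂ)) :
    (Dz f).coeff (f.natDegree + 1) =
      -2 * Ez (f.coeff f.natDegree) - (f.natDegree : MvPolynomial (Fin 2) ℂ) * f.coeff f.natDegree := by
  have e : Dz f = liftD dz f + Polynomial.C (-2) * (liftD Ez f * Polynomial.X) +
      (Polynomial.C (X 0 * X 1) * Polynomial.derivative f -
        Polynomial.derivative f * Polynomial.X * Polynomial.X) := by
    simp only [Dz, Derivation.add_apply, Derivation.smul_apply, smul_eq_mul,
      Derivation.restrictScalars_apply, Polynomial.derivative'_apply, map_neg, Polynomial.C_ofNat]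
    ring
  rw [e, Polynomial.coeff_add, Polynomial.coeff_add, Polynomial.coeff_sub, coeff_liftD,
    Polynomial.coeff_C_mul, Polynomial.coeff_mul_X, coeff_liftD, Polynomial.coeff_C_mul,
    Polynomial.coeff_mul_X, Polynomial.coeff_derivative,
    Polynomial.coeff_eq_zero_of_natDegree_lt (show f.natDegree < f.natDegree + 1 by omega),
    Polynomial.coeff_eq_zero_of_natDegree_lt (show f.natDegree < f.natDegree + 1 + 1 by omega)]
  have : (Polynomial.derivative f * Polynomial.X).coeff f.natDegree =
      (f.natDegree : MvPolynomial (Fin 2) ℂ) * f.coeff f.natDegree := by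
    rcases h : f.natDegree with _ | n
    · simp
    · rw [Polynomial.coeff_mul_X, Polynomial.coeff_derivative]; push_cast; ring
  rw [this]; simp; ring

lemma Dz_const (f : Polynomial (MvPolynomial (Fin 2) ℂ)) (k : ℂ)
    (h : Dz f = Polynomial.C (C k) * f) : ∃ c : ℂ, f = Polynomial.C (C c) := by
  by_cases hf : f = 0
  · exact ⟨0, by simp [hf]⟩
  have ht := Dz_top f
  rw [h, Polynomial.coeff_C_mul,
    Polynomial.coeff_eq_zero_of_natDegree_lt (show f.natDegree < f.natDegree + 1 by omega)] at ht
  have key : ∀ s, coeff s (f.coeff f.natDegree) ≠ 0 → f.natDegree = 0 ∧ s = 0 := by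
    intro s hs
    have := congrArg (coeff s) ht
    have e2 : -2 * Ez (f.coeff f.natDegree) - (f.natDegree : MvPolynomial (Fin 2) ℂ) *
      f.coeff f.natDegree = C (-2) * Ez (f.coeff f.natDegree) - C (f.natDegree : ℂ) *
      f.coeff f.natDegree := by
      rw [map_neg, map_ofNat, map_natCast]
    rw [e2, mul_zero, coeff_sub, coeff_C_mul, coeff_C_mul, coeff_Ez, coeff_zero] at this
    have h3 : ((2 * (s 0 + s 1) + f.natDegree : ℕ) : ℂ) * coeff s (f.coeff f.natDegree) = 0 := by
      push_cast at this ⊢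
      linear_combination this
    have h4 := (mul_eq_zero.1 h3).resolve_right hs
    rw [Nat.cast_eq_zero] at h4
    refine ⟨by omega, ?_⟩
    ext i
    fin_cases i <;> simp <;> omega
  obtain ⟨s, hs⟩ := ne_zero_iff.1 (Polynomial.leadingCoeff_ne_zero.2 hf)
  have hd := (key s hs).1
  refine ⟨coeff 0 (f.coeff 0), ?_⟩
  rw [Polynomial.eq_C_of_natDegree_eq_zero hd]
  congr 1
  rw [hd] at key
  ext t
  rw [coeff_C]
  split_ifs with h0
  · subst h0; simp
  · by_contra hne
    exact h0 ((key t (by simpa using hne)).2).symm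

lemma const_of_const_cofactor (G : MvPolynomial (Fin 3) ℂ) (k : ℂ) (h : dH G = C k * G) :
    ∃ c : ℂ, G = C c := by
  let P : Polynomial (MvPolynomial (Fin 2) ℂ) := Polynomial.C (X 0)
  let Q : Polynomial (MvPolynomial (Fin 2) ℂ) := Polynomial.C (X 1)
  let Z : Polynomial (MvPolynomial (Fin 2) ℂ) := Polynomial.X
  let f : Fin 3 → Polynomial (MvPolynomial (Fin 2) ℂ) := ![Z + P, Z + Q, Z]
  have hP : Dz P = -2 * P * (Z + Q) := by
    simp [Dz, P, Q, Z, liftD_C, dz, Ez, pderiv_X, Polynomial.C_ofNat]; ring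
  have hQ : Dz Q = -2 * Q * (Z + P) := by
    simp [Dz, P, Q, Z, liftD_C, dz, Ez, pderiv_X, Polynomial.C_ofNat]; ring
  have hZ : Dz Z = P * Q - Z ^ 2 := by
    simp [Dz, P, Q, Z, liftD_X]
  have tr := transport Dz f
    (by simp [f, V1, hP, hZ]; ring) (by simp [f, V2, hQ, hZ]; ring)
    (by simp [f, V3, hZ]; ring) G
  rw [h, map_mul] at tr
  have hC : ∀ c : ℂ, aeval f (C c : MvPolynomial (Fin 3) ℂ) = Polynomial.C (C c) := by
    intro c; simp [Polynomial.algebraMap_apply, MvPolynomial.algebraMap_eq]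
  rw [hC] at tr
  obtain ⟨c, hc⟩ := Dz_const _ k tr
  refine ⟨c, ?_⟩
  let σ : Polynomial (MvPolynomial (Fin 2) ℂ) →+* MvPolynomial (Fin 3) ℂ :=
    Polynomial.eval₂RingHom
      ((aeval ![X 0 - X 2, X 1 - X 2] : MvPolynomial (Fin 2) ℂ →ₐ[ℂ] MvPolynomial (Fin 3) ℂ) :
        MvPolynomial (Fin 2) ℂ →+* MvPolynomial (Fin 3) ℂ) (X 2)
  have hσ : ∀ F : MvPolynomial (Fin 3) ℂ, σ (aeval f F) = F := by
    intro F
    induction F using MvPolynomial.induction_on with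
    | C a => rw [hC]; simp [σ, MvPolynomial.algebraMap_eq]
    | add p q hp hq => rw [map_add, map_add, hp, hq]
    | mul_X p i hp =>
      rw [map_mul, map_mul, hp, aeval_X]
      congr 1
      fin_cases i <;> simp [f, σ, P, Q, Z]
  rw [← hσ G, hc, ← hC, hσ]

/-- If `A, B` are not both divisible by `L`, the cofactor is constant in the normal direction. -/
lemma plane_both (f : Fin 3 → Polynomial (Polynomial ℂ)) (u v L : MvPolynomial (Fin 3) ℂ)
    (hb : ∀ i, L ∣ back u v (f i) - X i) (hL : ¬ IsUnit L)
    (h0 : Dp (f 0) = aeval f V1) (h1 : Dp (f 1) = aeval f V2) (h2 : Dp (f 2) = aeval f V3)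
    (A B K : MvPolynomial (Fin 3) ℂ) (hAB : IsRelPrime A B)
    (hA : dH A = K * A) (hB : dH B = K * B) : (aeval f K).natDegree = 0 := by
  by_cases h : aeval f A = 0
  · by_cases h' : aeval f B = 0
    · exact absurd (hAB (plane_dvd f u v L hb A h) (plane_dvd f u v L hb B h')) hL
    · exact plane_K f h0 h1 h2 B K h' hB
  · exact plane_K f h0 h1 h2 A K h hA

lemma sub_not_unit (i j : Fin 3) : ¬ IsUnit (X i - X j : MvPolynomial (Fin 3) ℂ) := by
  intro h
  have := h.map (eval (fun _ => (0 : ℂ)))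
  simp at this

/-- The Halphen system has no non-trivial rational first integral:
if `B ≠ 0` and the rational function `F = A/B` satisfies `d_H(F) = 0` in the fraction
field `ℂ(x₁,x₂,x₃)` — by the quotient rule `d_H(A/B) = (d_H(A)·B − A·d_H(B))/B²`, this
is equivalent to `d_H(A)·B = A·d_H(B)` — then `F = A/B` is a constant, i.e. `A = c·B`
for some `c ∈ ℂ`. -/
theorem halphen_no_rational_first_integral
    (A B : MvPolynomial (Fin 3) ℂ) (hB : B ≠ 0)
    (hint : dH A * B = A * dH B) :
    ∃ c : ℂ, A = C c * B := by
  have leib : ∀ p q, dH (p * q) = dH p * q + p * dH q := by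
    intro p q
    simp only [dH, Derivation.leibniz, smul_eq_mul]; ring
  obtain ⟨b, a, g, hrel, rfl, rfl⟩ := UniqueFactorizationMonoid.exists_reduced_factors B hB A
  have hg : g ≠ 0 := left_ne_zero_of_mul hB
  have hb : b ≠ 0 := right_ne_zero_of_mul hB
  have h1 : dH a * b = a * dH b := by
    rw [leib, leib] at hint
    apply mul_left_cancel₀ (pow_ne_zero 2 hg)
    linear_combination hint
  obtain ⟨K, hK⟩ : b ∣ dH b := hrel.dvd_of_dvd_mul_left (Dvd.intro_left _ h1)
  rw [mul_comm] at hK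
  have hKa : dH a = K * a := by
    apply mul_right_cancel₀ hb
    rw [h1, hK]; ring
  have hdeg : K.totalDegree ≤ 1 := by
    by_cases hK0 : K = 0
    · simp [hK0]
    have := totalDegree_dH b
    rw [hK, totalDegree_mul_of_isDomain hK0 hb] at this
    omega
  obtain ⟨k, k1, k2, k3, rfl⟩ := linear_form K hdeg
  let Y : Polynomial (Polynomial ℂ) := Polynomial.C Polynomial.X
  let W : Polynomial (Polynomial ℂ) := Polynomial.X
  have hY : Dp Y = -Y ^ 2 := Dp_Y
  have hW : Dp W = -2 * Y * W := Dp_W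
  have hk3 : k3 = 0 := by
    have := plane_both ![Y, Y, Y + W] (X 0) (X 2 - X 0) (X 0 - X 1)
      (by intro i; fin_cases i <;> simp [back, Y, W]) (sub_not_unit _ _)
      (by simp [V1, hY]; ring) (by simp [V2, hY]; ring) (by simp [V3, hY, hW]; ring)
      b a _ hrel hK hKa
    have := Polynomial.coeff_eq_zero_of_natDegree_lt (this.trans_lt one_pos)
    simpa [Y, W, Polynomial.algebraMap_apply, Polynomial.coeff_C, Polynomial.coeff_X] using this
  have hk2 : k2 = 0 := by
    have := plane_both ![Y, Y + W, Y] (X 0) (X 1 - X 0) (X 0 - X 2)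
      (by intro i; fin_cases i <;> simp [back, Y, W]) (sub_not_unit _ _)
      (by simp [V1, hY]; ring) (by simp [V2, hY, hW]; ring) (by simp [V3, hY]; ring)
      b a _ hrel hK hKa
    have := Polynomial.coeff_eq_zero_of_natDegree_lt (this.trans_lt one_pos)
    simpa [Y, W, Polynomial.algebraMap_apply, Polynomial.coeff_C, Polynomial.coeff_X] using this
  have hk1 : k1 = 0 := by
    have := plane_both ![Y + W, Y, Y] (X 1) (X 0 - X 1) (X 1 - X 2)
      (by intro i; fin_cases i <;> simp [back, Y, W]) (sub_not_unit _ _)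
      (by simp [V1, hY, hW]; ring) (by simp [V2, hY]; ring) (by simp [V3, hY]; ring)
      b a _ hrel hK hKa
    have := Polynomial.coeff_eq_zero_of_natDegree_lt (this.trans_lt one_pos)
    simpa [Y, W, Polynomial.algebraMap_apply, Polynomial.coeff_C, Polynomial.coeff_X] using this
  subst hk1 hk2 hk3
  simp only [map_zero, zero_mul, add_zero] at hK hKa
  obtain ⟨c, rfl⟩ := const_of_const_cofactor a k hKa
  obtain ⟨e, rfl⟩ := const_of_const_cofactor b k hK
  have he : e ≠ 0 := by rintro rfl; simp at hb
  refine ⟨c / e, ?_⟩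
  rw [mul_left_comm, ← C_mul, div_mul_cancel₀ _ he]
end

section
/- Every irreducible homogeneous polynomial F ∈ ℂ[x₁,x₂,x₃] of degree ≥ 1 satisfying d_H(F) = P·F for some P ∈ ℂ[x₁,x₂,x₃] is a nonzero scalar multiple of one of F₁ = x₁−x₂, F₂ = x₂−x₃, F₃ = x₃−x₁. -/
open MvPolynomial

/-- The line on which the `k`-th coordinate is free and the two others equal `1`. -/
noncomputable def wline (k : Fin 3) : Fin 3 → Polynomial ℂ :=
  fun i => if i = k then Polynomial.X else 1

lemma deriv_wline (k : Fin 3) (F : MvPolynomial (Fin 3) ℂ) :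
    Polynomial.derivative (aeval (wline k) F) = aeval (wline k) (pderiv k F) := by
  induction F using MvPolynomial.induction_on with
  | C a => simp
  | add p q hp hq => simp [hp, hq]
  | mul_X p i hp =>
    by_cases h : i = k
    · subst h
      simp [hp, wline, Derivation.leibniz]
      ring
    · have h2 : pderiv k (X i : MvPolynomial (Fin 3) ℂ) = 0 := pderiv_X_of_ne h
      simp [hp, wline, Derivation.leibniz, h, h2]

lemma univ_lemma (g : Polynomial ℂ) (hg : g ≠ 0) (c d : ℂ)
    (h : (1 - Polynomial.X) * Polynomial.derivative g
      = (Polynomial.C c + Polynomial.C d * Polynomial.X) * g) :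
    d = 0 ∧ c = -(g.natDegree : ℂ) := by
  have hl : g.coeff g.natDegree ≠ 0 := by simpa using hg
  have hn1 : g.coeff (g.natDegree + 1) = 0 :=
    Polynomial.coeff_eq_zero_of_natDegree_lt (by omega)
  have hn2 : g.coeff (g.natDegree + 1 + 1) = 0 :=
    Polynomial.coeff_eq_zero_of_natDegree_lt (by omega)
  have hd : d = 0 := by
    have := congrArg (fun p => Polynomial.coeff p (g.natDegree + 1)) h
    simp only [sub_mul, add_mul, one_mul, mul_assoc, Polynomial.coeff_sub, Polynomial.coeff_add,
      Polynomial.coeff_C_mul, Polynomial.coeff_X_mul, Polynomial.coeff_derivative, hn1, hn2] at this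
    simpa [hg] using this.symm
  refine ⟨hd, ?_⟩
  subst hd
  have := congrArg (fun p => Polynomial.coeff p g.natDegree) h
  generalize hN : g.natDegree = n at *
  cases n with
  | zero =>
    simp [sub_mul, Polynomial.coeff_derivative, hn1] at this
    have h0 : g.coeff 0 ≠ 0 := hl
    rcases this with h | h
    · simp [h]
    · exact absurd h h0
  | succ n =>
    simp only [sub_mul, map_zero, zero_mul, add_zero, one_mul, Polynomial.coeff_sub,
      Polynomial.coeff_C_mul, Polynomial.coeff_X_mul, Polynomial.coeff_derivative, hn1] at this
    apply mul_right_cancel₀ hl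
    push_cast
    linear_combination -this

lemma ode_lemma (k : Fin 3) (F P : MvPolynomial (Fin 3) ℂ) (m : ℕ)
    (hhom : F.IsHomogeneous m) (hD : dH F = P * F) :
    (1 - Polynomial.X) * Polynomial.derivative (aeval (wline k) F)
      = (aeval (wline k) P + Polynomial.C (m : ℂ)) * aeval (wline k) F := by
  have hE := congrArg (aeval (wline k)) hhom.sum_X_mul_pderiv
  have hD' := congrArg (aeval (wline k)) hD
  rw [deriv_wline]
  fin_cases k <;>
  · simp [Fin.sum_univ_three, dH, V1, V2, V3, wline] at hE hD' ⊢
    linear_combination hE + hD'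

lemma zero_lemma (i j k : Fin 3) (hij : i ≠ j) (hik : i ≠ k) (hjk : j ≠ k)
    (F : MvPolynomial (Fin 3) ℂ) (m : ℕ)
    (hhom : F.IsHomogeneous m) (h0 : aeval (wline k) F = 0) :
    (X i - X j : MvPolynomial (Fin 3) ℂ) ∣ F := by
  let s : Fin 3 → MvPolynomial (Fin 3) ℂ := fun l => if l = k then X k else X j
  have hs : aeval s F = 0 := by
    have hX : (X j : MvPolynomial (Fin 3) ℂ) * aeval s F = 0 := by
      apply MvPolynomial.funext
      intro v
      by_cases hv : v j = 0
      · simp [hv]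
      have e1 : eval v (aeval s F) = eval (fun l => v j * (if l = k then v k / v j else 1)) F := by
        rw [← MvPolynomial.coe_aeval_eq_eval, ← MvPolynomial.coe_aeval_eq_eval]
        simp only [RingHom.coe_coe]
        rw [← AlgHom.comp_apply, comp_aeval]
        congr 2
        funext l
        by_cases hl : l = k
        · simp [s, hl]; field_simp
        · simp [s, hl]
      have e2 : eval (fun l => (if l = k then v k / v j else 1)) F = 0 := by
        have := congrArg (Polynomial.aeval (v k / v j)) h0
        rw [← AlgHom.comp_apply, comp_aeval, map_zero] at this
        rw [← this, ← MvPolynomial.coe_aeval_eq_eval]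
        simp only [RingHom.coe_coe]
        congr 2
        funext l
        by_cases hl : l = k <;> simp [wline, hl]
      have e3 : ∀ (t : ℂ) (w : Fin 3 → ℂ), eval (fun l => t * w l) F = t ^ m * eval w F := by
        intro t w
        rw [eval_eq, eval_eq, Finset.mul_sum]
        refine Finset.sum_congr rfl fun d hd => ?_
        have hdeg := hhom.degree_eq_sum_deg_support hd
        simp only [mul_pow, Finset.prod_mul_distrib, Finset.prod_pow_eq_pow_sum]
        have : ∑ i ∈ d.support, d i = m := hdeg.symm
        rw [this]; ring
      rw [map_mul, e1, e3, e2, mul_zero, mul_zero, map_zero]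
    exact (mul_eq_zero.mp hX).resolve_left (X_ne_zero j)
  have hq : (Ideal.Quotient.mkₐ ℂ (Ideal.span {(X i - X j : MvPolynomial (Fin 3) ℂ)})).comp (aeval s)
      = Ideal.Quotient.mkₐ ℂ (Ideal.span {(X i - X j : MvPolynomial (Fin 3) ℂ)}) := by
    apply MvPolynomial.algHom_ext
    intro l
    have hl : l = i ∨ l = j ∨ l = k := by
      omega
    simp only [AlgHom.comp_apply, aeval_X, Ideal.Quotient.mkₐ_eq_mk, s]
    rcases hl with rfl | rfl | rfl
    · simp only [hik, if_false]
      rw [eq_comm, Ideal.Quotient.eq]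
      exact Ideal.mem_span_singleton_self _
    · simp [hjk]
    · simp
  have := congrArg (fun f => f F) hq
  simp only [AlgHom.comp_apply, hs, map_zero] at this
  exact Ideal.mem_span_singleton.mp (Ideal.Quotient.eq_zero_iff_mem.mp this.symm)

lemma dH_hom (F : MvPolynomial (Fin 3) ℂ) (m : ℕ) (hm : 1 ≤ m)
    (hhom : F.IsHomogeneous m) : (dH F).IsHomogeneous (1 + m) := by
  have hX := fun i : Fin 3 => isHomogeneous_X ℂ i
  have hV : ∀ a b c : Fin 3,
      (X a * X b - X c * (X a + X b) : MvPolynomial (Fin 3) ℂ).IsHomogeneous 2 := fun a b c =>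
    ((hX a).mul (hX b)).sub ((hX c).mul ((hX a).add (hX b)))
  have e : 1 + m = 2 + (m - 1) := by omega
  rw [e]
  exact (((hV 1 2 0).mul hhom.pderiv).add ((hV 2 0 1).mul hhom.pderiv)).add
    ((hV 0 1 2).mul hhom.pderiv)

lemma P_linear (F P : MvPolynomial (Fin 3) ℂ) (m : ℕ) (hF : F ≠ 0)
    (hhom : F.IsHomogeneous m) (hPF : (P * F).IsHomogeneous (1 + m)) : P.IsHomogeneous 1 := by
  let _ := MvPolynomial.gradedAlgebra (σ := Fin 3) (R := ℂ)
  have h1 := DirectSum.coe_decompose_mul_add_of_right_mem (homogeneousSubmodule (Fin 3) ℂ)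
    (i := 1) (a := P) (b_mem := (mem_homogeneousSubmodule m F).mpr hhom)
  rw [DirectSum.decompose_of_mem_same _ ((mem_homogeneousSubmodule _ _).mpr hPF)] at h1
  have h2 := mul_right_cancel₀ hF h1
  rw [h2]
  exact (mem_homogeneousSubmodule _ _).mp (SetLike.coe_mem _)

lemma assoc_lemma (i j : Fin 3) (F : MvPolynomial (Fin 3) ℂ)
    (hirr : Irreducible F) (h : (X i - X j : MvPolynomial (Fin 3) ℂ) ∣ F) :
    ∃ c : ℂ, c ≠ 0 ∧ F = C c * (X i - X j) := by
  obtain ⟨q, hq⟩ := h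
  rcases hirr.isUnit_or_isUnit hq with hu | hu
  · exfalso
    have := hu.map (eval (fun _ => (0 : ℂ)))
    simp at this
  · obtain ⟨c, hc, rfl⟩ := (MvPolynomial.isUnit_iff_eq_C_of_isReduced).mp hu
    exact ⟨c, hc.ne_zero, by rw [hq, mul_comm]⟩

/-- Every irreducible homogeneous polynomial `F ∈ ℂ[x₁,x₂,x₃]` of
degree `≥ 1` satisfying `d_H(F) = P·F` for some polynomial `P` is a nonzero scalar
multiple of one of `F₁ = x₁−x₂`, `F₂ = x₂−x₃`, `F₃ = x₃−x₁`. -/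
theorem halphen_irreducible_darboux_classification
    (F : MvPolynomial (Fin 3) ℂ) (m : ℕ) (hm : 1 ≤ m)
    (hhom : F.IsHomogeneous m) (hirr : Irreducible F)
    (P : MvPolynomial (Fin 3) ℂ) (hD : dH F = P * F) :
    ∃ c : ℂ, c ≠ 0 ∧
      (F = C c * (X 0 - X 1) ∨ F = C c * (X 1 - X 2) ∨ F = C c * (X 2 - X 0)) := by
  by_cases h2 : aeval (wline 2) F = 0
  · obtain ⟨c, hc, h⟩ := assoc_lemma 0 1 F hirr
      (zero_lemma 0 1 2 (by decide) (by decide) (by decide) F m hhom h2)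
    exact ⟨c, hc, Or.inl h⟩
  by_cases h0 : aeval (wline 0) F = 0
  · obtain ⟨c, hc, h⟩ := assoc_lemma 1 2 F hirr
      (zero_lemma 1 2 0 (by decide) (by decide) (by decide) F m hhom h0)
    exact ⟨c, hc, Or.inr (Or.inl h)⟩
  by_cases h1 : aeval (wline 1) F = 0
  · obtain ⟨c, hc, h⟩ := assoc_lemma 2 0 F hirr
      (zero_lemma 2 0 1 (by decide) (by decide) (by decide) F m hhom h1)
    exact ⟨c, hc, Or.inr (Or.inr h)⟩
  exfalso
  have hP : P.IsHomogeneous 1 :=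
    P_linear F P m hirr.ne_zero hhom (hD ▸ dH_hom F m hm hhom)
  obtain ⟨a, ha⟩ : ∃ a : Fin 3 → ℂ, ∑ i, a i • (X i : MvPolynomial (Fin 3) ℂ) = P := by
    have : P ∈ Submodule.span ℂ (Set.range (X : Fin 3 → MvPolynomial (Fin 3) ℂ)) := by
      rw [← homogeneousSubmodule_one_eq_span_X]
      exact (mem_homogeneousSubmodule _ _).mpr hP
    exact (Submodule.mem_span_range_iff_exists_fun ℂ).mp this
  have e0 := univ_lemma _ h0 (a 1 + a 2 + m) (a 0) (by
    rw [ode_lemma 0 F P m hhom hD, ← ha]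
    congr 1
    simp [Fin.sum_univ_three, wline, Polynomial.smul_eq_C_mul]; ring)
  have e1 := univ_lemma _ h1 (a 0 + a 2 + m) (a 1) (by
    rw [ode_lemma 1 F P m hhom hD, ← ha]
    congr 1
    simp [Fin.sum_univ_three, wline, Polynomial.smul_eq_C_mul]; ring)
  have e2 := univ_lemma _ h2 (a 0 + a 1 + m) (a 2) (by
    rw [ode_lemma 2 F P m hhom hD, ← ha]
    congr 1
    simp [Fin.sum_univ_three, wline, Polynomial.smul_eq_C_mul]; ring)
  have e3 := e2.2
  rw [e0.1, e1.1] at e3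
  have e4 : ((m + (aeval (wline 2) F).natDegree : ℕ) : ℂ) = 0 := by
    push_cast
    linear_combination e3
  have e5 := Nat.cast_eq_zero.mp e4
  omega
end

section
/- Every Darboux polynomial of the Halphen system is, up to a nonzero multiplicative constant, of the form F₁^{i₁}·F₂^{i₂}·F₃^{i₃} for some non-negative integers i₁, i₂, i₃ with i₁+i₂+i₃ > 0, where F₁ = x₁−x₂, F₂ = x₂−x₃, F₃ = x₃−x₁. That is, if F ∈ ℂ[x₁,x₂,x₃] is non-constant and d_H(F) = P·F for some P ∈ ℂ[x₁,x₂,x₃], then F = α·(x₁−x₂)^{i₁}(x₂−x₃)^{i₂}(x₃−x₁)^{i₃} for some α ∈ ℂ, α ≠ 0. -/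
open MvPolynomial

namespace HalphenAux

/-- The invariant curve in the plane where all coordinates but the `k`-th agree. -/
noncomputable def curve (k : Fin 3) (c : ℂ) (l : Fin 3) : Polynomial ℂ :=
  if l = k then Polynomial.X - Polynomial.C c * Polynomial.X ^ 2 else Polynomial.X

lemma chain (x : Fin 3 → Polynomial ℂ) (F : MvPolynomial (Fin 3) ℂ) :
    Polynomial.derivative (aeval x F) =
      ∑ l, aeval x (pderiv l F) * Polynomial.derivative (x l) := by
  induction F using MvPolynomial.induction_on with
  | C a => simp
  | add p q hp hq => simp only [map_add, hp, hq, add_mul, Finset.sum_add_distrib]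
  | mul_X p i hp =>
    simp only [map_mul, Polynomial.derivative_mul, hp, Derivation.leibniz, aeval_X, pderiv_X,
      smul_eq_mul, map_add, Fin.sum_univ_three]
    fin_cases i <;> simp [Pi.single_apply] <;> ring

lemma curve_dH (k : Fin 3) (c : ℂ) (F : MvPolynomial (Fin 3) ℂ) :
    aeval (curve k c) (dH F) =
      - (Polynomial.X ^ 2 * Polynomial.derivative (aeval (curve k c) F)) := by
  rw [chain, Fin.sum_univ_three]
  simp only [dH, V1, V2, V3, map_add, map_mul, map_sub, aeval_X]
  fin_cases k <;> simp [curve] <;> ring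

lemma poly_core (φ : Polynomial ℂ) (hφ : φ ≠ 0) (l0 μ ν : ℂ)
    (h : - (Polynomial.X ^ 2 * Polynomial.derivative φ) =
      (Polynomial.C l0 + Polynomial.C μ * Polynomial.X - Polynomial.C ν * Polynomial.X ^ 2) * φ) :
    ν = 0 ∧ l0 = 0 ∧ (μ = 0 → φ = Polynomial.C (φ.eval 0)) := by
  have hco := fun n => congrArg (fun q => Polynomial.coeff q n) h
  have e : (Polynomial.C l0 + Polynomial.C μ * Polynomial.X
      - Polynomial.C ν * Polynomial.X ^ 2) * φ = Polynomial.C l0 * φ +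
      Polynomial.C μ * (Polynomial.X * φ) - Polynomial.C ν * (Polynomial.X ^ 2 * φ) := by ring
  simp only [e, Polynomial.coeff_neg, Polynomial.coeff_add, Polynomial.coeff_sub,
    Polynomial.coeff_C_mul] at hco
  have hν : ν = 0 := by
    have := hco (φ.natDegree + 2)
    rw [Polynomial.coeff_X_pow_mul, Polynomial.coeff_X_pow_mul, Polynomial.coeff_derivative,
      Polynomial.coeff_X_mul, Polynomial.coeff_eq_zero_of_natDegree_lt (by omega),
      Polynomial.coeff_eq_zero_of_natDegree_lt (by omega)] at this
    have h2 : φ.coeff φ.natDegree ≠ 0 := by simpa using hφ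
    have h3 : ν * φ.coeff φ.natDegree = 0 := by linear_combination this
    exact (mul_eq_zero.mp h3).resolve_right h2
  have step : ∀ n : ℕ, l0 * φ.coeff (n + 1) = - (n + μ) * φ.coeff n := by
    intro n
    have := hco (n + 1)
    rw [Polynomial.coeff_X_mul, hν, Polynomial.coeff_X_pow_mul'] at this
    rcases n with _ | n
    · simp at this
      simp
      linear_combination -this
    · simp [Polynomial.coeff_derivative] at this
      push_cast
      linear_combination -this
  have h00 : l0 * φ.coeff 0 = 0 := by
    have := hco 0
    simpa [Polynomial.coeff_X_pow_mul', hν] using this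
  have hl0 : l0 = 0 := by
    by_contra hne
    apply hφ
    ext n
    induction n with
    | zero => simpa [hne] using h00
    | succ n ih =>
      have := step n
      rw [ih] at this
      simpa [hne] using this
  refine ⟨hν, hl0, fun hμ => ?_⟩
  ext n
  rcases n with _ | n
  · simp [Polynomial.coeff_zero_eq_eval_zero]
  · have := step (n + 1)
    rw [hl0, hμ] at this
    have hn : ((n : ℂ) + 1) ≠ 0 := by exact_mod_cast Nat.succ_ne_zero n
    simp [Polynomial.coeff_C]
    have h4 : ((n : ℂ) + 1) * φ.coeff (n + 1) = 0 := by
      push_cast at this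
      linear_combination this
    exact (mul_eq_zero.mp h4).resolve_left hn

lemma dvd_sub_subst (i j : Fin 3) (G : MvPolynomial (Fin 3) ℂ) :
    (X i - X j : MvPolynomial (Fin 3) ℂ) ∣
      G - aeval (fun l => if l = i then (X j : MvPolynomial (Fin 3) ℂ) else X l) G := by
  induction G using MvPolynomial.induction_on with
  | C a => simp
  | add p q hp hq =>
    rw [map_add, add_sub_add_comm]
    exact dvd_add hp hq
  | mul_X p l hp =>
    rw [map_mul, aeval_X]
    split_ifs with h
    · subst h
      obtain ⟨r, hr⟩ := hp
      refine ⟨r * X j + p, ?_⟩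
      linear_combination (X j) * hr
    · rw [← sub_mul]
      exact hp.mul_right _

lemma fin3_other : ∀ i j k l : Fin 3, i ≠ j → i ≠ k → j ≠ k → l ≠ k → l ≠ i → l = j := by
  intro i j k l
  omega

lemma C_two : (C 2 : MvPolynomial (Fin 3) ℂ) = 2 := map_ofNat C 2

lemma dvd_of_curves (i j k : Fin 3) (hij : i ≠ j) (hik : i ≠ k) (hjk : j ≠ k)
    (G : MvPolynomial (Fin 3) ℂ) (h : ∀ c : ℂ, c ≠ 0 → aeval (curve k c) G = 0) :
    (X i - X j : MvPolynomial (Fin 3) ℂ) ∣ G := by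
  have key : aeval (fun l => if l = i then (X j : MvPolynomial (Fin 3) ℂ) else X l) G = 0 := by
    have h1 : (X j * (X j - X k)) *
        aeval (fun l => if l = i then (X j : MvPolynomial (Fin 3) ℂ) else X l) G = 0 := by
      apply MvPolynomial.funext
      intro v
      rw [map_mul, map_zero, map_mul, map_sub, eval_X, eval_X]
      by_cases hj : v j = 0
      · simp [hj]
      by_cases hk : v j - v k = 0
      · simp [hk]
      have h2 := h ((v j - v k) / (v j) ^ 2) (div_ne_zero hk (pow_ne_zero _ hj))
      have h3 := congrArg (Polynomial.aeval (v j)) h2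
      rw [map_zero, ← AlgHom.comp_apply, comp_aeval] at h3
      have h4 : eval v (aeval (fun l => if l = i then (X j : MvPolynomial (Fin 3) ℂ) else X l) G)
          = 0 := by
        rw [← h3, ← coe_aeval_eq_eval]
        change (aeval v) _ = _
        rw [← AlgHom.comp_apply, comp_aeval]
        congr 2
        funext l
        by_cases hlk : l = k
        · subst hlk
          simp [curve, Ne.symm hik]
          field_simp
          ring
        · by_cases hli : l = i
          · simp [curve, hli, hik]
          · have : l = j := fin3_other i j k l hij hik hjk hlk hli
            subst this
            simp [curve, hlk, hli]
      rw [h4, mul_zero]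
    refine (mul_eq_zero.mp h1).resolve_left (mul_ne_zero (X_ne_zero _) ?_)
    rw [sub_ne_zero]
    exact fun h => hjk (X_injective h)
  have := dvd_sub_subst i j G
  rwa [key, sub_zero] at this

lemma restrict (i j k : Fin 3) (hij : i ≠ j) (hik : i ≠ k) (hjk : j ≠ k)
    (G : MvPolynomial (Fin 3) ℂ) (l0 : ℂ) (l : Fin 3 → ℂ)
    (hD : dH G = (C l0 + ∑ m, C (l m) * X m) * G)
    (hnd : ¬ (X i - X j : MvPolynomial (Fin 3) ℂ) ∣ G) :
    l k = 0 ∧ l0 = 0 ∧ ((∀ m, l m = 0) →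
      (X i - X j : MvPolynomial (Fin 3) ℂ) ∣ G - C (eval 0 G)) := by
  have main : ∀ c : ℂ, aeval (curve k c) G ≠ 0 →
      l k * c = 0 ∧ l0 = 0 ∧ (l 0 + l 1 + l 2 = 0 →
        aeval (curve k c) G = Polynomial.C ((aeval (curve k c) G).eval 0)) := by
    intro c hc
    apply poly_core _ hc
    rw [← curve_dH, hD, map_mul]
    congr 1
    simp only [map_add, map_mul, Fin.sum_univ_three, aeval_X, aeval_C, algebraMap_eq,
      Polynomial.algebraMap_eq]
    fin_cases k <;> simp [curve] <;> ring
  have heval : ∀ c : ℂ, (aeval (curve k c) G).eval 0 = eval 0 G := by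
    intro c
    have : (Polynomial.aeval (0 : ℂ)) (aeval (curve k c) G) = aeval (0 : Fin 3 → ℂ) G := by
      rw [← AlgHom.comp_apply, comp_aeval]
      congr 2
      funext m
      simp only [curve]
      split_ifs <;> simp
    simpa [Polynomial.aeval_def, Polynomial.eval₂_eq_eval_map, aeval_eq_eval] using this
  obtain ⟨c, hc, hcG⟩ : ∃ c : ℂ, c ≠ 0 ∧ aeval (curve k c) G ≠ 0 := by
    by_contra hcon
    push Not at hcon
    exact hnd (dvd_of_curves i j k hij hik hjk G hcon)
  obtain ⟨h1, h2, h3⟩ := main c hcG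
  refine ⟨(mul_eq_zero.mp h1).resolve_right hc, h2, fun hl => ?_⟩
  have hs : l 0 + l 1 + l 2 = 0 := by simp [hl]
  apply dvd_of_curves i j k hij hik hjk
  intro c' _
  rw [map_sub, aeval_C, Polynomial.algebraMap_eq, sub_eq_zero]
  by_cases h0 : aeval (curve k c') G = 0
  · exfalso
    apply hcG
    rw [h3 hs, heval, ← heval c', h0]
    simp
  · rw [(main c' h0).2.2 hs, heval]

lemma dH_mul (A B : MvPolynomial (Fin 3) ℂ) : dH (A * B) = dH A * B + A * dH B := by
  simp only [dH, Derivation.leibniz, smul_eq_mul]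
  ring

lemma dH_F1 : dH (X 0 - X 1) = (-2 * X 2) * (X 0 - X 1) := by
  simp [dH, V1, V2, V3, pderiv_X, Pi.single_apply]; ring
lemma dH_F2 : dH (X 1 - X 2) = (-2 * X 0) * (X 1 - X 2) := by
  simp [dH, V1, V2, V3, pderiv_X, Pi.single_apply]; ring
lemma dH_F3 : dH (X 2 - X 0) = (-2 * X 1) * (X 2 - X 0) := by
  simp [dH, V1, V2, V3, pderiv_X, Pi.single_apply]; ring

lemma Xsub_ne (i j : Fin 3) (h : i ≠ j) : (X i - X j : MvPolynomial (Fin 3) ℂ) ≠ 0 := by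
  rw [sub_ne_zero]
  exact fun e => h (X_injective e)

lemma dH_quot (L G P c : MvPolynomial (Fin 3) ℂ) (hL : L ≠ 0) (hc : dH L = c * L)
    (h : dH (L * G) = P * (L * G)) : dH G = (P - c) * G := by
  rw [dH_mul, hc] at h
  apply mul_left_cancel₀ hL
  linear_combination h

lemma deg_lt (i j : Fin 3) (h : i ≠ j) (G : MvPolynomial (Fin 3) ℂ) (hG : G ≠ 0) :
    G.totalDegree < ((X i - X j) * G).totalDegree := by
  rw [totalDegree_mul_of_isDomain (Xsub_ne i j h) hG]
  have : (X i - X j : MvPolynomial (Fin 3) ℂ).totalDegree ≠ 0 := by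
    intro h0
    rw [totalDegree_eq_zero_iff_eq_C] at h0
    have h1 := congrArg (pderiv i) h0
    simp [pderiv_X_of_ne (Ne.symm h)] at h1
  omega

lemma descent : ∀ (d n : ℕ) (G : MvPolynomial (Fin 3) ℂ), G.totalDegree ≤ d → 0 < n →
    dH G = (C (n : ℂ) * X 2) * G → G = 0 := by
  intro d
  induction d with
  | zero =>
    intro n G hd hn h
    rw [Nat.le_zero, totalDegree_eq_zero_iff_eq_C] at hd
    rw [hd] at h ⊢
    have hn' : (n : ℂ) ≠ 0 := by exact_mod_cast hn.ne'
    simpa [dH, X_ne_zero, hn.ne', hn'] using h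
  | succ d ih =>
    intro n G hd hn h
    by_contra hG
    have hn' : (n : ℂ) ≠ 0 := by exact_mod_cast hn.ne'
    by_cases hdv : (X 0 - X 1 : MvPolynomial (Fin 3) ℂ) ∣ G
    · obtain ⟨Q, rfl⟩ := hdv
      have hQ : Q ≠ 0 := fun e => hG (by simp [e])
      have h1 := deg_lt 0 1 (by decide) Q hQ
      have h2 := dH_quot _ _ _ _ (Xsub_ne 0 1 (by decide)) dH_F1 h
      refine hQ (ih (n + 2) Q (by omega) (by omega) ?_)
      rw [h2]
      push_cast
      rw [map_add, C_two]
      ring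
    · have := (restrict 0 1 2 (by decide) (by decide) (by decide) G 0 ![0, 0, n]
        (by rw [h]; simp [Fin.sum_univ_three]) hdv).1
      simp [hn.ne'] at this

lemma pderiv_deg (i : Fin 3) (F : MvPolynomial (Fin 3) ℂ) (h : pderiv i F ≠ 0) :
    (pderiv i F).totalDegree + 1 ≤ F.totalDegree := by
  obtain ⟨m, hm, hmd⟩ : ∃ m ∈ (pderiv i F).support, (pderiv i F).totalDegree = m.degree := by
    have := Finset.exists_mem_eq_sup (pderiv i F).support (support_nonempty.mpr h)
      (fun s => s.degree)
    exact this
  rw [hmd]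
  have h1 : m + Finsupp.single i 1 ∈ F.support := by
    rw [mem_support_iff, coeff_pderiv] at hm
    rw [mem_support_iff]
    intro h0
    simp [h0] at hm
  have h2 := le_totalDegree h1
  have h3 : ((m + Finsupp.single i 1).sum fun _ e => e) = m.degree + 1 := by
    change (m + Finsupp.single i 1).degree = _
    simp
  omega

lemma Vmul_deg (V : MvPolynomial (Fin 3) ℂ) (hV : V.totalDegree ≤ 2) (i : Fin 3)
    (F : MvPolynomial (Fin 3) ℂ) : (V * pderiv i F).totalDegree ≤ F.totalDegree + 1 := by
  by_cases h : pderiv i F = 0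
  · simp [h]
  · have := pderiv_deg i F h
    have := totalDegree_mul V (pderiv i F)
    omega

lemma V_deg (i j k : Fin 3) :
    (X i * X j - X k * (X i + X j) : MvPolynomial (Fin 3) ℂ).totalDegree ≤ 2 := by
  have hX : ∀ i : Fin 3, (X i : MvPolynomial (Fin 3) ℂ).IsHomogeneous 1 := isHomogeneous_X ℂ
  exact (((hX i).mul (hX j)).sub ((hX k).mul ((hX i).add (hX j)))).totalDegree_le

lemma dH_deg (F : MvPolynomial (Fin 3) ℂ) : (dH F).totalDegree ≤ F.totalDegree + 1 := by
  unfold dH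
  refine (totalDegree_add _ _).trans (max_le ((totalDegree_add _ _).trans (max_le ?_ ?_)) ?_)
  · exact Vmul_deg _ (V_deg 1 2 0) _ _
  · exact Vmul_deg _ (V_deg 2 0 1) _ _
  · exact Vmul_deg _ (V_deg 0 1 2) _ _

lemma linear_form (P : MvPolynomial (Fin 3) ℂ) (h : P.totalDegree ≤ 1) :
    ∃ (l0 : ℂ) (l : Fin 3 → ℂ), P = C l0 + ∑ m, C (l m) * X m := by
  rw [P.as_sum]
  apply Finset.sum_induction _ (fun P : MvPolynomial (Fin 3) ℂ =>
    ∃ (l0 : ℂ) (l : Fin 3 → ℂ), P = C l0 + ∑ m, C (l m) * X m)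
  · rintro _ _ ⟨a, l, rfl⟩ ⟨b, l', rfl⟩
    refine ⟨a + b, l + l', ?_⟩
    simp only [Pi.add_apply, map_add, add_mul, Finset.sum_add_distrib]
    ring
  · exact ⟨0, 0, by simp⟩
  · intro m hm
    have h1 : m.degree ≤ 1 := (le_totalDegree hm).trans h
    rcases Nat.le_one_iff_eq_zero_or_eq_one.mp h1 with h2 | h2
    · rw [Finsupp.degree_eq_zero_iff] at h2
      exact ⟨coeff m P, 0, by simp [h2]⟩
    · obtain ⟨i, rfl⟩ : ∃ i, m = Finsupp.single i 1 := by
        obtain ⟨i, hi⟩ : ∃ i, m i ≠ 0 := by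
          by_contra hcon
          push Not at hcon
          have : m = 0 := Finsupp.ext hcon
          simp [this] at h2
        refine ⟨i, ?_⟩
        have hle : Finsupp.single i 1 ≤ m := by
          simpa using Nat.one_le_iff_ne_zero.mpr hi
        obtain ⟨t, rfl⟩ := exists_add_of_le hle
        have ht : t.degree = 0 := by simpa using h2
        rw [Finsupp.degree_eq_zero_iff] at ht
        simp [ht]
      refine ⟨0, Pi.single i (coeff (Finsupp.single i 1) P), ?_⟩
      rw [Finset.sum_eq_single i]
      · simp [C_mul_X_eq_monomial]
      · intro b _ hb
        simp [hb]
      · simp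

lemma classify : ∀ (d : ℕ) (F P : MvPolynomial (Fin 3) ℂ), F.totalDegree ≤ d → F ≠ 0 →
    dH F = P * F → ∃ (α : ℂ) (i₁ i₂ i₃ : ℕ), α ≠ 0 ∧
      F = C α * (X 0 - X 1) ^ i₁ * (X 1 - X 2) ^ i₂ * (X 2 - X 0) ^ i₃ := by
  intro d
  induction d with
  | zero =>
    intro F P hd hF h
    rw [Nat.le_zero, totalDegree_eq_zero_iff_eq_C] at hd
    refine ⟨coeff 0 F, 0, 0, 0, ?_, by simpa using hd⟩
    intro h0
    apply hF
    rw [hd, h0, C_0]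
  | succ d ih =>
    intro F P hd hF h
    by_cases h1 : (X 0 - X 1 : MvPolynomial (Fin 3) ℂ) ∣ F
    · obtain ⟨Q, rfl⟩ := h1
      have hQ : Q ≠ 0 := fun e => hF (by simp [e])
      have h1 := deg_lt 0 1 (by decide) Q hQ
      obtain ⟨α, a, b, c, hα, e⟩ := ih Q _ (by omega) hQ
        (dH_quot _ _ _ _ (Xsub_ne 0 1 (by decide)) dH_F1 h)
      exact ⟨α, a + 1, b, c, hα, by rw [e]; ring⟩
    by_cases h2 : (X 1 - X 2 : MvPolynomial (Fin 3) ℂ) ∣ F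
    · obtain ⟨Q, rfl⟩ := h2
      have hQ : Q ≠ 0 := fun e => hF (by simp [e])
      have h1 := deg_lt 1 2 (by decide) Q hQ
      obtain ⟨α, a, b, c, hα, e⟩ := ih Q _ (by omega) hQ
        (dH_quot _ _ _ _ (Xsub_ne 1 2 (by decide)) dH_F2 h)
      exact ⟨α, a, b + 1, c, hα, by rw [e]; ring⟩
    by_cases h3 : (X 2 - X 0 : MvPolynomial (Fin 3) ℂ) ∣ F
    · obtain ⟨Q, rfl⟩ := h3
      have hQ : Q ≠ 0 := fun e => hF (by simp [e])
      have h1 := deg_lt 2 0 (by decide) Q hQ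
      obtain ⟨α, a, b, c, hα, e⟩ := ih Q _ (by omega) hQ
        (dH_quot _ _ _ _ (Xsub_ne 2 0 (by decide)) dH_F3 h)
      exact ⟨α, a, b, c + 1, hα, by rw [e]; ring⟩
    have hP : P.totalDegree ≤ 1 := by
      by_cases hP0 : P = 0
      · simp [hP0]
      · have := dH_deg F
        rw [h, totalDegree_mul_of_isDomain hP0 hF] at this
        omega
    obtain ⟨l0, l, rfl⟩ := linear_form P hP
    obtain ⟨a2, b, hdv⟩ := restrict 0 1 2 (by decide) (by decide) (by decide) F l0 l h h1
    obtain ⟨a0, -, -⟩ := restrict 1 2 0 (by decide) (by decide) (by decide) F l0 l h h2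
    obtain ⟨a1, -, -⟩ := restrict 2 0 1 (by decide) (by decide) (by decide) F l0 l h h3
    have hl : ∀ m, l m = 0 := by
      intro m
      fin_cases m <;> assumption
    obtain ⟨Q, hQ⟩ := hdv hl
    have hdF : dH F = 0 := by rw [h]; simp [hl, b]
    have hz : dH ((X 0 - X 1) * Q) = 0 * ((X 0 - X 1) * Q) := by
      rw [← hQ, zero_mul, ← hdF]
      simp [dH]
    have h4 := dH_quot _ _ _ _ (Xsub_ne 0 1 (by decide)) dH_F1 hz
    have h5 := descent _ 2 Q le_rfl (by norm_num) (by rw [h4]; simp [C_two])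
    rw [h5, mul_zero, sub_eq_zero] at hQ
    refine ⟨eval 0 F, 0, 0, 0, ?_, by simpa using hQ⟩
    intro h0
    apply hF
    rw [hQ, h0, C_0]

end HalphenAux

/-- Every Darboux polynomial of the Halphen system is, up to a nonzero
multiplicative constant, of the form `F₁^{i₁}·F₂^{i₂}·F₃^{i₃}` with `i₁+i₂+i₃ > 0`,
where `F₁ = x₁−x₂`, `F₂ = x₂−x₃`, `F₃ = x₃−x₁`. -/
theorem halphen_darboux_classification
    (F : MvPolynomial (Fin 3) ℂ) (hnc : ∀ c : ℂ, F ≠ C c)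
    (P : MvPolynomial (Fin 3) ℂ) (hD : dH F = P * F) :
    ∃ (α : ℂ) (i₁ i₂ i₃ : ℕ), α ≠ 0 ∧ 0 < i₁ + i₂ + i₃ ∧
      F = C α * (X 0 - X 1) ^ i₁ * (X 1 - X 2) ^ i₂ * (X 2 - X 0) ^ i₃ := by
  obtain ⟨α, a, b, c, hα, e⟩ := HalphenAux.classify _ F P le_rfl
    (fun h => hnc 0 (by simpa using h)) hD
  refine ⟨α, a, b, c, hα, ?_, e⟩
  by_contra h
  obtain ⟨rfl, rfl, rfl⟩ : a = 0 ∧ b = 0 ∧ c = 0 := by omega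
  exact hnc α (by simpa using e)
end
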